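/- arXiv:0906.0208 — 2 statements merged into one kernel-verified Lean document; each statement's English description precedes it below -/
import Mathlib

section
/- Let (x_n)_{n≥0} be a sequence of nonnegative real numbers, let A, B ≥ 0 and 0 < α < 1, and suppose x_{n+1} ≤ A + B·x_n^α for all n. Then there exists a constant g(α) > 1, depending only on α (and independent of A, B and the sequence), such that limsup_n x_n ≤ g(α)·max(A, B^{1/(1−α)}); in particular, the sequence (x_n) is bounded. -/
open Set Filter

noncomputable section

/-- The parabolic distance on `[0,T] × ℝ`:
`d_p((t₁,x₁),(t₂,x₂)) = √|t₁−t₂| + |x₁−x₂|`. -/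
def pd (t₁ x₁ t₂ x₂ : ℝ) : ℝ := Real.sqrt |t₁ - t₂| + |x₁ - x₂|

/-- Sup-norm `‖u‖₀` of `u` over `[0,T] × ℝ`. -/
def supN (T : ℝ) (u : ℝ → ℝ → ℝ) : ℝ :=
  sInf {M : ℝ | 0 ≤ M ∧ ∀ t ∈ Icc (0:ℝ) T, ∀ x : ℝ, |u t x| ≤ M}

/-- One-sided supremum `sup u` of `u` over `[0,T] × ℝ`. -/
def supU (T : ℝ) (u : ℝ → ℝ → ℝ) : ℝ :=
  sInf {M : ℝ | ∀ t ∈ Icc (0:ℝ) T, ∀ x : ℝ, u t x ≤ M}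

/-- The parabolic `α`-Hölder seminorm `[u]_α` of `u` over `[0,T] × ℝ`. -/
def hSemi (T α : ℝ) (u : ℝ → ℝ → ℝ) : ℝ :=
  sInf {K : ℝ | 0 ≤ K ∧ ∀ t₁ ∈ Icc (0:ℝ) T, ∀ t₂ ∈ Icc (0:ℝ) T, ∀ x₁ x₂ : ℝ,
    |u t₁ x₁ - u t₂ x₂| ≤ K * pd t₁ x₁ t₂ x₂ ^ α}

/-- The Hölder norm `‖u‖_α = ‖u‖₀ + [u]_α`. -/
def hNorm (T α : ℝ) (u : ℝ → ℝ → ℝ) : ℝ := supN T u + hSemi T α u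

/-- The weighted sup-norm `‖u‖_β = sup_{(t,x)} e^{−β(T−t)} |u(t,x)|`. -/
def wNorm (T β : ℝ) (u : ℝ → ℝ → ℝ) : ℝ :=
  sInf {M : ℝ | 0 ≤ M ∧ ∀ t ∈ Icc (0:ℝ) T, ∀ x : ℝ, Real.exp (-β * (T - t)) * |u t x| ≤ M}

/-- Membership in `C^α([0,T]×ℝ)`: bounded, continuous, with finite parabolic
`α`-Hölder constant. -/
def MemCa (T α : ℝ) (u : ℝ → ℝ → ℝ) : Prop :=
  ContinuousOn (fun p : ℝ × ℝ => u p.1 p.2) (Icc (0:ℝ) T ×ˢ (univ : Set ℝ)) ∧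
  (∃ M : ℝ, ∀ t ∈ Icc (0:ℝ) T, ∀ x : ℝ, |u t x| ≤ M) ∧
  (∃ K : ℝ, ∀ t₁ ∈ Icc (0:ℝ) T, ∀ t₂ ∈ Icc (0:ℝ) T, ∀ x₁ x₂ : ℝ,
    |u t₁ x₁ - u t₂ x₂| ≤ K * pd t₁ x₁ t₂ x₂ ^ α)

/-- Membership in `C^{1,2+α}([0,T]×ℝ)`: `u ∈ C^α`, and the partial derivatives
`u_t`, `u_x`, `u_xx` exist on `(0,T) × ℝ` and are (extended to) the `C^α` functions
`ut`, `ux`, `uxx`. -/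
structure MemC12a (T α : ℝ) (u ut ux uxx : ℝ → ℝ → ℝ) : Prop where
  memU : MemCa T α u
  memUt : MemCa T α ut
  memUx : MemCa T α ux
  memUxx : MemCa T α uxx
  hasUt : ∀ t ∈ Ioo (0:ℝ) T, ∀ x : ℝ, HasDerivAt (fun s => u s x) (ut t x) t
  hasUx : ∀ t ∈ Ioo (0:ℝ) T, ∀ x : ℝ, HasDerivAt (fun y => u t y) (ux t x) x
  hasUxx : ∀ t ∈ Ioo (0:ℝ) T, ∀ x : ℝ, HasDerivAt (fun y => ux t y) (uxx t x) x

/-- Sup-norm `‖g‖₀` of a function `g : ℝ → ℝ`. -/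
def gSupN (g : ℝ → ℝ) : ℝ := sInf {M : ℝ | 0 ≤ M ∧ ∀ x : ℝ, |g x| ≤ M}

/-- `α`-Hölder constant of a function `g : ℝ → ℝ`. -/
def gHSemi (α : ℝ) (g : ℝ → ℝ) : ℝ :=
  sInf {K : ℝ | 0 ≤ K ∧ ∀ x y : ℝ, |g x - g y| ≤ K * |x - y| ^ α}

/-- Membership in `C^{2+α}(ℝ)`: twice continuously differentiable, with `g`, `g'`, `g''`
bounded and `g''` `α`-Hölder. -/
def MemC2a (α : ℝ) (g : ℝ → ℝ) : Prop :=
  ContDiff ℝ 2 g ∧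
  (∃ M : ℝ, ∀ x : ℝ, |g x| ≤ M ∧ |deriv g x| ≤ M ∧ |deriv (deriv g) x| ≤ M) ∧
  (∃ K : ℝ, ∀ x y : ℝ, |deriv (deriv g) x - deriv (deriv g) y| ≤ K * |x - y| ^ α)

/-- The `C^{2+α}(ℝ)` norm: `‖g‖_{2+α} = ‖g‖₀ + ‖g'‖₀ + ‖g''‖₀ + [g'']_α`. -/
def gNorm2a (α : ℝ) (g : ℝ → ℝ) : ℝ :=
  gSupN g + gSupN (deriv g) + gSupN (deriv (deriv g)) + gHSemi α (deriv (deriv g))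

/-!
Young's inequality linearises the recursion: `B * t ^ α ≤ (1 - α) * B ^ (1 / (1 - α)) + α * t`, so
`x` satisfies an affine recursive inequality with ratio `α < 1`. Its distance above the fixed point
`A / (1 - α) + B ^ (1 / (1 - α))` of the affine map is therefore at most a null geometric sequence.
-/

section AffineRecursion

variable {u : ℕ → ℝ} {c r : ℝ}

theorem le_div_one_sub_add_pow_mul_of_succ_le (hr₀ : 0 ≤ r) (hr₁ : r ≠ 1)
    (hu : ∀ n, u (n + 1) ≤ c + r * u n) (n : ℕ) :
    u n ≤ c / (1 - r) + r ^ n * (u 0 - c / (1 - r)) := by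
  have fixed : c + r * (c / (1 - r)) = c / (1 - r) := by
    field_simp [sub_ne_zero.mpr hr₁.symm]
    ring
  have contraction (k : ℕ) : u (k + 1) - c / (1 - r) ≤ r * (u k - c / (1 - r)) := by
    linarith [hu k]
  have geometric := le_geom (u := fun k ↦ u k - c / (1 - r)) hr₀ n fun k _ ↦ contraction k
  linarith

theorem tendsto_const_add_pow_mul_of_lt_one (hr₀ : 0 ≤ r) (hr₁ : r < 1) (a b : ℝ) :
    Tendsto (fun n : ℕ ↦ a + r ^ n * b) atTop (nhds a) := by
  simpa using ((tendsto_pow_atTop_nhds_zero_of_lt_one hr₀ hr₁).mul_const b).const_add a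

theorem bddAbove_range_of_succ_le_add_mul (hr₀ : 0 ≤ r) (hr₁ : r < 1)
    (hu : ∀ n, u (n + 1) ≤ c + r * u n) : BddAbove (range u) :=
  BddAbove.range_mono _ (le_div_one_sub_add_pow_mul_of_succ_le hr₀ hr₁.ne hu)
    (tendsto_const_add_pow_mul_of_lt_one hr₀ hr₁ _ _).bddAbove_range

theorem limsup_le_of_succ_le_add_mul (hr₀ : 0 ≤ r) (hr₁ : r < 1)
    (hu : ∀ n, u (n + 1) ≤ c + r * u n) (hcob : IsCoboundedUnder (· ≤ ·) atTop u) :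
    limsup u atTop ≤ c / (1 - r) := by
  have majorant := tendsto_const_add_pow_mul_of_lt_one hr₀ hr₁ (c / (1 - r)) (u 0 - c / (1 - r))
  rw [← majorant.limsup_eq]
  exact limsup_le_limsup
    (.of_forall (le_div_one_sub_add_pow_mul_of_succ_le hr₀ hr₁.ne hu)) hcob
    majorant.isBoundedUnder_le

end AffineRecursion

section PowerRecursion

variable {α A B : ℝ} {x : ℕ → ℝ}

theorem mul_rpow_le_one_sub_mul_rpow_add_mul {t : ℝ} (hα₀ : 0 ≤ α) (hα₁ : α < 1) (hB : 0 ≤ B)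
    (ht : 0 ≤ t) : B * t ^ α ≤ (1 - α) * B ^ (1 / (1 - α)) + α * t := by
  have hα : 0 < 1 - α := sub_pos.mpr hα₁
  calc B * t ^ α = (B ^ (1 / (1 - α))) ^ (1 - α) * t ^ α := by
        rw [one_div, Real.rpow_inv_rpow hB hα.ne']
    _ ≤ (1 - α) * B ^ (1 / (1 - α)) + α * t :=
        Real.geom_mean_le_arith_mean2_weighted hα.le hα₀ (Real.rpow_nonneg hB _) ht
          (sub_add_cancel 1 α)

theorem succ_le_add_mul_of_succ_le_add_mul_rpow (hα₀ : 0 ≤ α) (hα₁ : α < 1) (hB : 0 ≤ B)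
    (hx : ∀ n, 0 ≤ x n) (hrec : ∀ n, x (n + 1) ≤ A + B * x n ^ α) (n : ℕ) :
    x (n + 1) ≤ (A + (1 - α) * B ^ (1 / (1 - α))) + α * x n := by
  linarith [hrec n, mul_rpow_le_one_sub_mul_rpow_add_mul hα₀ hα₁ hB (hx n)]

theorem bddAbove_range_of_succ_le_add_mul_rpow (hα₀ : 0 ≤ α) (hα₁ : α < 1) (hB : 0 ≤ B)
    (hx : ∀ n, 0 ≤ x n) (hrec : ∀ n, x (n + 1) ≤ A + B * x n ^ α) : BddAbove (range x) :=
  bddAbove_range_of_succ_le_add_mul hα₀ hα₁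
    (succ_le_add_mul_of_succ_le_add_mul_rpow hα₀ hα₁ hB hx hrec)

theorem limsup_le_of_succ_le_add_mul_rpow (hα₀ : 0 ≤ α) (hα₁ : α < 1) (hB : 0 ≤ B)
    (hx : ∀ n, 0 ≤ x n) (hrec : ∀ n, x (n + 1) ≤ A + B * x n ^ α) :
    limsup x atTop ≤ A / (1 - α) + B ^ (1 / (1 - α)) := by
  have hcob : IsCoboundedUnder (· ≤ ·) atTop x :=
    (isBoundedUnder_of ⟨0, hx⟩ : IsBoundedUnder (· ≥ ·) atTop x).isCoboundedUnder_le
  calc limsup x atTop ≤ (A + (1 - α) * B ^ (1 / (1 - α))) / (1 - α) :=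
        limsup_le_of_succ_le_add_mul hα₀ hα₁
          (succ_le_add_mul_of_succ_le_add_mul_rpow hα₀ hα₁ hB hx hrec) hcob
    _ = A / (1 - α) + B ^ (1 / (1 - α)) := by
        rw [add_div, mul_div_cancel_left₀ _ (sub_pos.mpr hα₁).ne']

end PowerRecursion

/-- a recursive-inequality bound. -/
theorem stmt_0 (α : ℝ) (hα0 : 0 < α) (hα1 : α < 1) :
    ∃ g : ℝ, 1 < g ∧
      ∀ (A B : ℝ) (x : ℕ → ℝ), 0 ≤ A → 0 ≤ B → (∀ n : ℕ, 0 ≤ x n) →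
        (∀ n : ℕ, x (n + 1) ≤ A + B * x n ^ α) →
        Filter.limsup x Filter.atTop ≤ g * max A (B ^ (1 / (1 - α))) ∧
        BddAbove (Set.range x) := by
  have hα : 0 < 1 - α := sub_pos.mpr hα1
  refine ⟨1 / (1 - α) + 1, lt_add_of_pos_left 1 (one_div_pos.mpr hα), ?_⟩
  intro A B x hA hB hx hrec
  refine ⟨?_, bddAbove_range_of_succ_le_add_mul_rpow hα0.le hα1 hB hx hrec⟩
  calc limsup x atTop ≤ A / (1 - α) + B ^ (1 / (1 - α)) :=
        limsup_le_of_succ_le_add_mul_rpow hα0.le hα1 hB hx hrec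
    _ ≤ max A (B ^ (1 / (1 - α))) / (1 - α) + max A (B ^ (1 / (1 - α))) := by
        gcongr
        exacts [le_max_left _ _, le_max_right _ _]
    _ = (1 / (1 - α) + 1) * max A (B ^ (1 / (1 - α))) := by ring
end
end

section
/- Let g ∈ C^{2+α}(ℝ), h, a, b ∈ C^α([0,T]×ℝ), γ > 0, with a ≥ 0 and b ≥ 0 pointwise, and let u ∈ C^{1,2+α}([0,T]×ℝ) solve 0 = u_t + ½u_xx + h·u_x + a − b·e^{γu} on [0,T)×ℝ with u(T,·) = g. Then for all (t,x) ∈ [0,T]×ℝ: −(1/γ)·log(e^{γ‖g‖₀} + γT‖b‖₀) ≤ u(t,x) ≤ ‖g‖₀ + T‖a‖₀. -/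
open Set Filter

noncomputable section

/-- `u` (with derivative extensions `ut, ux, uxx`) solves the semilinear Cauchy problem
`0 = u_t + ½ u_xx + h u_x + a − b e^{γu}` on `[0,T) × ℝ`, `u(T,·) = g`. -/
def SolvesSemi (T γ : ℝ) (h a b : ℝ → ℝ → ℝ) (g : ℝ → ℝ) (ut ux uxx : ℝ → ℝ → ℝ)
    (u : ℝ → ℝ → ℝ) : Prop :=
  (∀ t ∈ Ico (0:ℝ) T, ∀ x : ℝ,
    ut t x + (1/2) * uxx t x + h t x * ux t x + a t x
      - b t x * Real.exp (γ * u t x) = 0) ∧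
  ∀ x : ℝ, u T x = g x

/-!
The drift and diffusion coefficients grow slowly enough that `e^{K(T-t)} (1 + x²)` is a strict
supersolution of `L = ∂ₜ + σ ∂ₓₓ + h ∂ₓ`. Subtracting a small multiple of it from a subsolution that
is bounded above forces a positive maximum to be attained, which the derivative tests exclude; this
gives a comparison principle for `L u + f(t, x, u) = 0` with `f` antitone in `u`.

Both bounds then come from comparing `u` with functions of time alone: the upper barrier solves
`y' = -‖a‖₀`, `y(T) = ‖g‖₀`, and the lower barrier solves `y' = ‖b‖₀ e^{γy}`, `y(T) = -‖g‖₀`.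
-/

open scoped Topology

section DerivativeTests

variable {f : ℝ → ℝ} {c x : ℝ}

theorem second_deriv_nonpos_of_isLocalMax {f' : ℝ → ℝ}
    (hf : ∀ᶠ y in 𝓝 x, HasDerivAt f (f' y) y) (hf' : HasDerivAt f' c x)
    (hmax : IsLocalMax f x) : c ≤ 0 := by
  by_contra! hc
  have deriv_eq : deriv f =ᶠ[𝓝 x] f' := hf.mono fun _ hy => hy.deriv
  have deriv_deriv_eq : deriv (deriv f) x = c := deriv_eq.deriv_eq.trans hf'.deriv
  -- A positive second derivative makes `x` a local minimum too, so `f` is locally constant.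
  have hmin : IsLocalMin f x :=
    isLocalMin_of_deriv_deriv_pos (deriv_deriv_eq ▸ hc) hmax.deriv_eq_zero
      hf.self_of_nhds.continuousAt
  have hconst : f =ᶠ[𝓝 x] fun _ => f x := by
    filter_upwards [hmin, hmax] with y hle hge using le_antisymm hge hle
  have : deriv (deriv f) x = 0 := by
    simpa only [deriv_const', deriv_const] using hconst.deriv.deriv_eq
  exact hc.ne' (deriv_deriv_eq.symm.trans this)

theorem deriv_nonpos_of_isLocalMaxOn_Ici (hf : HasDerivWithinAt f c (Ici x) x)
    (hmax : IsLocalMaxOn f (Ici x) x) : c ≤ 0 := by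
  have one_mem : (1 : ℝ) ∈ posTangentConeAt (Ici x) x :=
    mem_posTangentConeAt_of_segment_subset <| by
      rw [segment_eq_Icc (by linarith)]
      exact Icc_subset_Ici_self
  simpa using hmax.hasFDerivWithinAt_nonpos hf.hasFDerivWithinAt one_mem

end DerivativeTests

/-- `w` is continuous on `[t₀,T] × ℝ` and has the partial derivatives `wt = ∂ₜw`, `wx = ∂ₓw` and
`wxx = ∂ₓₓw` on `(t₀,T) × ℝ`: the regularity of a classical solution. -/
structure HasParabolicDerivs (t₀ T : ℝ) (w wt wx wxx : ℝ → ℝ → ℝ) : Prop where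
  continuousOn : ContinuousOn (fun p : ℝ × ℝ => w p.1 p.2) (Icc t₀ T ×ˢ univ)
  hasDerivAt_time : ∀ t ∈ Ioo t₀ T, ∀ x, HasDerivAt (fun s => w s x) (wt t x) t
  hasDerivAt_space : ∀ t ∈ Ioo t₀ T, ∀ x, HasDerivAt (w t) (wx t x) x
  hasDerivAt_space_space : ∀ t ∈ Ioo t₀ T, ∀ x, HasDerivAt (wx t) (wxx t x) x

/-- The backward parabolic operator `L w = ∂ₜw + σ ∂ₓₓw + h ∂ₓw`, as a function of the
partial derivatives of `w`. -/
def parabolicOp (σ h wt wx wxx : ℝ → ℝ → ℝ) (t x : ℝ) : ℝ :=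
  wt t x + σ t x * wxx t x + h t x * wx t x

/-- Khasminskii's condition on the coefficients of `∂ₜ + σ ∂ₓₓ + h ∂ₓ`: degenerate ellipticity, and
`x ↦ 1 + x²` is a Lyapunov function, i.e. `(σ ∂ₓₓ + h ∂ₓ)(1 + x²) ≤ 2 K (1 + x²)`. -/
structure QuadraticLyapunov (t₀ T : ℝ) (σ h : ℝ → ℝ → ℝ) : Prop where
  diffusion_nonneg : ∀ t ∈ Ioo t₀ T, ∀ x, 0 ≤ σ t x
  exists_growth_le : ∃ K : ℝ, ∀ t ∈ Ioo t₀ T, ∀ x, σ t x + h t x * x ≤ K * (1 + x ^ 2)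

section ParabolicOperator

variable {t₀ T t x : ℝ} {σ h u ut ux uxx v vt vx vxx : ℝ → ℝ → ℝ}

theorem parabolicOp_sub :
    parabolicOp σ h (ut - vt) (ux - vx) (uxx - vxx) t x =
      parabolicOp σ h ut ux uxx t x - parabolicOp σ h vt vx vxx t x := by
  simp only [parabolicOp, Pi.sub_apply]
  ring

theorem parabolicOp_const_smul (c : ℝ) :
    parabolicOp σ h (c • ut) (c • ux) (c • uxx) t x = c * parabolicOp σ h ut ux uxx t x := by
  simp only [parabolicOp, Pi.smul_apply, smul_eq_mul]
  ring

theorem parabolicOp_time (y' : ℝ → ℝ) : parabolicOp σ h (fun t _ => y' t) 0 0 t x = y' t := by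
  simp [parabolicOp]

namespace HasParabolicDerivs

theorem sub (hu : HasParabolicDerivs t₀ T u ut ux uxx) (hv : HasParabolicDerivs t₀ T v vt vx vxx) :
    HasParabolicDerivs t₀ T (u - v) (ut - vt) (ux - vx) (uxx - vxx) where
  continuousOn := hu.continuousOn.sub hv.continuousOn
  hasDerivAt_time t ht x := (hu.hasDerivAt_time t ht x).sub (hv.hasDerivAt_time t ht x)
  hasDerivAt_space t ht x := (hu.hasDerivAt_space t ht x).sub (hv.hasDerivAt_space t ht x)
  hasDerivAt_space_space t ht x :=
    (hu.hasDerivAt_space_space t ht x).sub (hv.hasDerivAt_space_space t ht x)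

theorem const_smul (c : ℝ) (hu : HasParabolicDerivs t₀ T u ut ux uxx) :
    HasParabolicDerivs t₀ T (c • u) (c • ut) (c • ux) (c • uxx) where
  continuousOn := hu.continuousOn.const_smul c
  hasDerivAt_time t ht x := (hu.hasDerivAt_time t ht x).const_smul c
  hasDerivAt_space t ht x := (hu.hasDerivAt_space t ht x).const_smul c
  hasDerivAt_space_space t ht x := (hu.hasDerivAt_space_space t ht x).const_smul c

theorem of_time {y y' : ℝ → ℝ} (hy : ContinuousOn y (Icc t₀ T))
    (hy' : ∀ t ∈ Ioo t₀ T, HasDerivAt y (y' t) t) :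
    HasParabolicDerivs t₀ T (fun t _ => y t) (fun t _ => y' t) 0 0 where
  continuousOn := hy.comp continuousOn_fst fun _ hp => hp.1
  hasDerivAt_time t ht _ := hy' t ht
  hasDerivAt_space t _ x := hasDerivAt_const x (y t)
  hasDerivAt_space_space _ _ x := hasDerivAt_const x 0

theorem parabolicOp_nonpos_of_isLocalMax (hu : HasParabolicDerivs t₀ T u ut ux uxx)
    (ht : t ∈ Ioo t₀ T) (hσ : 0 ≤ σ t x) (htime : IsLocalMaxOn (fun s => u s x) (Ici t) t)
    (hspace : IsLocalMax (u t) x) : parabolicOp σ h ut ux uxx t x ≤ 0 := by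
  have ut_nonpos : ut t x ≤ 0 :=
    deriv_nonpos_of_isLocalMaxOn_Ici (hu.hasDerivAt_time t ht x).hasDerivWithinAt htime
  have ux_eq_zero : ux t x = 0 := hspace.hasDerivAt_eq_zero (hu.hasDerivAt_space t ht x)
  have uxx_nonpos : uxx t x ≤ 0 :=
    second_deriv_nonpos_of_isLocalMax (.of_forall (hu.hasDerivAt_space t ht))
      (hu.hasDerivAt_space_space t ht x) hspace
  have := mul_nonpos_of_nonneg_of_nonpos hσ uxx_nonpos
  rw [parabolicOp, ux_eq_zero]
  linarith

theorem nonpos_of_nonpos_on_Ioo (hu : HasParabolicDerivs t₀ T u ut ux uxx)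
    (hT : ∀ x, u T x ≤ 0) (hIoo : ∀ t ∈ Ioo t₀ T, ∀ x, u t x ≤ 0) :
    ∀ t ∈ Icc t₀ T, ∀ x, u t x ≤ 0 := by
  intro t ht x
  obtain rfl | htT := ht.2.eq_or_lt
  · exact hT x
  have hcont : ContinuousOn (fun s => u s x) (Icc t₀ T) :=
    hu.continuousOn.comp (f := fun s => (s, x)) (by fun_prop) fun _ hs => ⟨hs, mem_univ _⟩
  rw [← closure_Ioo (ht.1.trans_lt htT).ne] at hcont ht
  exact le_on_closure (fun s hs => hIoo s hs x) hcont continuousOn_const ht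

end HasParabolicDerivs

end ParabolicOperator

section MaximumPrinciple

variable {t₀ T : ℝ} {σ h w wt wx wxx : ℝ → ℝ → ℝ}

theorem exists_max_of_nonpos_of_lt_abs {R t₁ x₁ : ℝ}
    (hw : ContinuousOn (fun p : ℝ × ℝ => w p.1 p.2) (Icc t₀ T ×ˢ univ))
    (hR : ∀ t ∈ Icc t₀ T, ∀ x, R < |x| → w t x ≤ 0) (ht₁ : t₁ ∈ Icc t₀ T) (hw₁ : 0 ≤ w t₁ x₁) :
    ∃ t ∈ Icc t₀ T, ∃ x, ∀ s ∈ Icc t₀ T, ∀ y, w s y ≤ w t x := by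
  have hdecay : ∀ᶠ p in cocompact (ℝ × ℝ) ⊓ 𝓟 (Icc t₀ T ×ˢ univ), w p.1 p.2 ≤ w t₁ x₁ := by
    rw [eventually_inf_principal]
    filter_upwards [(isCompact_Icc.prod isCompact_Icc :
      IsCompact (Icc t₀ T ×ˢ Icc (-R) R)).compl_mem_cocompact] with p hp hpstrip
    refine (hR p.1 hpstrip.1 p.2 ?_).trans hw₁
    by_contra! hle
    exact hp ⟨hpstrip.1, abs_le.mp hle⟩
  obtain ⟨⟨t, x⟩, ⟨ht, -⟩, hmax⟩ :=
    hw.exists_isMaxOn' (isClosed_Icc.prod isClosed_univ) (x₀ := (t₁, x₁)) ⟨ht₁, mem_univ _⟩ hdecay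
  exact ⟨t, ht, x, fun s hs y => hmax (show (s, y) ∈ Icc t₀ T ×ˢ univ from ⟨hs, mem_univ _⟩)⟩

theorem nonpos_of_parabolicOp_pos {R : ℝ} (hw : HasParabolicDerivs t₀ T w wt wx wxx)
    (hσ : ∀ t ∈ Ioo t₀ T, ∀ x, 0 ≤ σ t x) (hR : ∀ t ∈ Icc t₀ T, ∀ x, R < |x| → w t x ≤ 0)
    (hT : ∀ x, w T x ≤ 0)
    (hL : ∀ t ∈ Ioo t₀ T, ∀ x, 0 < w t x → 0 < parabolicOp σ h wt wx wxx t x) :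
    ∀ t ∈ Icc t₀ T, ∀ x, w t x ≤ 0 := by
  refine hw.nonpos_of_nonpos_on_Ioo hT fun t₁ ht₁ x₁ => ?_
  by_contra! hpos
  -- Maximising over times `≥ t₁ > t₀` keeps the maximum away from `t₀`.
  have hsub : Icc t₁ T ⊆ Icc t₀ T := Icc_subset_Icc_left ht₁.1.le
  obtain ⟨t, ht, x, hmax⟩ := exists_max_of_nonpos_of_lt_abs
    (hw.continuousOn.mono (prod_mono_left hsub)) (fun t ht => hR t (hsub ht))
    (left_mem_Icc.mpr ht₁.2.le) hpos.le
  have hwpos : 0 < w t x := hpos.trans_le (hmax t₁ (left_mem_Icc.mpr ht₁.2.le) x₁)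
  have htT : t < T := ht.2.lt_of_ne fun htT => (hT x).not_gt (htT ▸ hwpos)
  have htIoo : t ∈ Ioo t₀ T := ⟨ht₁.1.trans_le ht.1, htT⟩
  have htime : IsLocalMaxOn (fun s => w s x) (Ici t) t := by
    filter_upwards [Ico_mem_nhdsGE htT] with s hs
    exact hmax s ⟨ht.1.trans hs.1, hs.2.le⟩ x
  have hspace : IsLocalMax (w t) x := .of_forall (hmax t ht)
  exact (hw.parabolicOp_nonpos_of_isLocalMax htIoo (hσ t htIoo x) htime hspace).not_gt
    (hL t htIoo x hwpos)

/-- The barrier `e^{K(T-t)} (1 + x²)`, a strict supersolution for large `K` under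
`QuadraticLyapunov`. -/
def quadraticBarrier (K T t x : ℝ) : ℝ := Real.exp (K * (T - t)) * (1 + x ^ 2)

theorem one_add_sq_le_quadraticBarrier {K t : ℝ} (x : ℝ) (hK : 0 ≤ K) (ht : t ≤ T) :
    1 + x ^ 2 ≤ quadraticBarrier K T t x :=
  le_mul_of_one_le_left (by positivity)
    (Real.one_le_exp (mul_nonneg hK (sub_nonneg.mpr ht)))

theorem quadraticBarrier_pos (K T t x : ℝ) : 0 < quadraticBarrier K T t x :=
  mul_pos (Real.exp_pos _) (by positivity)

theorem hasParabolicDerivs_quadraticBarrier (K t₀ T : ℝ) :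
    HasParabolicDerivs t₀ T (quadraticBarrier K T)
      (fun t x => Real.exp (K * (T - t)) * -K * (1 + x ^ 2))
      (fun t x => Real.exp (K * (T - t)) * (2 * x)) (fun t _ => Real.exp (K * (T - t)) * 2) where
  continuousOn := by
    unfold quadraticBarrier
    fun_prop
  hasDerivAt_time t _ x := by
    have hexponent : HasDerivAt (fun s => K * (T - s)) (-K) t := by
      simpa using ((hasDerivAt_id t).const_sub T).const_mul K
    exact hexponent.exp.mul_const _
  hasDerivAt_space t _ x := by
    have hsq : HasDerivAt (fun y : ℝ => 1 + y ^ 2) (2 * x) x := by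
      simpa using (hasDerivAt_pow 2 x).const_add 1
    exact hsq.const_mul _
  hasDerivAt_space_space t _ x := by
    simpa using ((hasDerivAt_id x).const_mul 2).const_mul (Real.exp (K * (T - t)))

theorem parabolicOp_quadraticBarrier_neg {K t x : ℝ}
    (hK : 2 * (σ t x + h t x * x) < K * (1 + x ^ 2)) :
    parabolicOp σ h (fun t x => Real.exp (K * (T - t)) * -K * (1 + x ^ 2))
      (fun t x => Real.exp (K * (T - t)) * (2 * x)) (fun t _ => Real.exp (K * (T - t)) * 2)
      t x < 0 :=
  calc
    _ = Real.exp (K * (T - t)) * (2 * (σ t x + h t x * x) - K * (1 + x ^ 2)) := by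
      rw [parabolicOp]
      ring
    _ < 0 := mul_neg_of_pos_of_neg (Real.exp_pos _) (sub_neg.mpr hK)

theorem sub_mul_quadraticBarrier_nonpos_of_lt_abs {K M ε t x r : ℝ} (hK : 0 ≤ K) (ht : t ≤ T)
    (hε : 0 < ε) (hr : r ≤ M) (hx : |M| / ε + 1 < |x|) :
    r - ε * quadraticBarrier K T t x ≤ 0 := by
  have hx_one : 1 ≤ |x| := by linarith [show 0 ≤ |M| / ε by positivity]
  rw [sub_nonpos]
  calc
    r ≤ |M| := hr.trans (le_abs_self M)
    _ = ε * (|M| / ε) := by field_simp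
    _ ≤ ε * (1 + x ^ 2) := by
      gcongr
      rw [← sq_abs]
      nlinarith
    _ ≤ ε * quadraticBarrier K T t x := by
      gcongr
      exact one_add_sq_le_quadraticBarrier x hK ht

namespace QuadraticLyapunov

theorem of_bounded_drift {c H : ℝ} (hc : 0 ≤ c) (hh : ∀ t ∈ Ioo t₀ T, ∀ x, |h t x| ≤ H) :
    QuadraticLyapunov t₀ T (fun _ _ => c) h where
  diffusion_nonneg _ _ _ := hc
  exists_growth_le := by
    refine ⟨c + H, fun t ht x => ?_⟩
    have hH : 0 ≤ H := (abs_nonneg _).trans (hh t ht x)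
    have habs : |x| ≤ 1 + x ^ 2 := by
      rw [← sq_abs]
      nlinarith [sq_nonneg (|x| - 1)]
    calc
      c + h t x * x ≤ c + |h t x| * |x| :=
        add_le_add_right ((le_abs_self _).trans_eq (abs_mul _ _)) c
      _ ≤ c * (1 + x ^ 2) + H * (1 + x ^ 2) := by
        gcongr
        · exact le_mul_of_one_le_right hc (by linarith [sq_nonneg x])
        · exact hh t ht x
      _ = (c + H) * (1 + x ^ 2) := by ring

theorem exists_pos_growth_lt (hc : QuadraticLyapunov t₀ T σ h) :
    ∃ K > 0, ∀ t ∈ Ioo t₀ T, ∀ x, 2 * (σ t x + h t x * x) < K * (1 + x ^ 2) := by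
  obtain ⟨K, hK⟩ := hc.exists_growth_le
  refine ⟨2 * |K| + 1, by positivity, fun t ht x => ?_⟩
  calc
    2 * (σ t x + h t x * x) ≤ 2 * (|K| * (1 + x ^ 2)) := by
      gcongr
      exact (hK t ht x).trans (by gcongr; exact le_abs_self K)
    _ < (2 * |K| + 1) * (1 + x ^ 2) := by linarith [sq_nonneg x]

theorem nonpos_of_parabolicOp_nonneg (hc : QuadraticLyapunov t₀ T σ h)
    (hw : HasParabolicDerivs t₀ T w wt wx wxx)
    (hbdd : ∃ M, ∀ t ∈ Icc t₀ T, ∀ x, w t x ≤ M) (hT : ∀ x, w T x ≤ 0)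
    (hL : ∀ t ∈ Ioo t₀ T, ∀ x, 0 < w t x → 0 ≤ parabolicOp σ h wt wx wxx t x) :
    ∀ t ∈ Icc t₀ T, ∀ x, w t x ≤ 0 := by
  obtain ⟨M, hM⟩ := hbdd
  obtain ⟨K, hK, hgrowth⟩ := hc.exists_pos_growth_lt
  have sub_barrier_nonpos :
      ∀ ε > 0, ∀ t ∈ Icc t₀ T, ∀ x, w t x - ε * quadraticBarrier K T t x ≤ 0 := by
    intro ε hε
    refine nonpos_of_parabolicOp_pos (σ := σ) (h := h)
      (hw.sub ((hasParabolicDerivs_quadraticBarrier K t₀ T).const_smul ε)) hc.diffusion_nonneg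
      (fun t ht x => sub_mul_quadraticBarrier_nonpos_of_lt_abs hK.le ht.2 hε (hM t ht x))
      (fun x => ?_) (fun t ht x hpos => ?_)
    · exact sub_nonpos.mpr ((hT x).trans (mul_pos hε (quadraticBarrier_pos K T T x)).le)
    · have w_pos : 0 < w t x :=
        (mul_pos hε (quadraticBarrier_pos K T t x)).trans (sub_pos.mp hpos)
      rw [parabolicOp_sub, parabolicOp_const_smul, sub_pos]
      exact (mul_neg_of_pos_of_neg hε (parabolicOp_quadraticBarrier_neg (hgrowth t ht x))).trans_le
        (hL t ht x w_pos)
  intro t ht x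
  have hφ := quadraticBarrier_pos K T t x
  refine le_of_forall_pos_le_add fun δ hδ => ?_
  have := sub_barrier_nonpos (δ / quadraticBarrier K T t x) (by positivity) t ht x
  rw [div_mul_cancel₀ _ hφ.ne'] at this
  linarith

theorem le_of_subsolution_of_supersolution {u ut ux uxx v vt vx vxx : ℝ → ℝ → ℝ}
    {f : ℝ → ℝ → ℝ → ℝ} (hc : QuadraticLyapunov t₀ T σ h)
    (hf : ∀ t ∈ Ioo t₀ T, ∀ x, Antitone (f t x))
    (hu : HasParabolicDerivs t₀ T u ut ux uxx) (hv : HasParabolicDerivs t₀ T v vt vx vxx)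
    (hbdd : ∃ M, ∀ t ∈ Icc t₀ T, ∀ x, u t x - v t x ≤ M) (hT : ∀ x, u T x ≤ v T x)
    (hsub : ∀ t ∈ Ioo t₀ T, ∀ x, 0 ≤ parabolicOp σ h ut ux uxx t x + f t x (u t x))
    (hsuper : ∀ t ∈ Ioo t₀ T, ∀ x, parabolicOp σ h vt vx vxx t x + f t x (v t x) ≤ 0) :
    ∀ t ∈ Icc t₀ T, ∀ x, u t x ≤ v t x := by
  suffices ∀ t ∈ Icc t₀ T, ∀ x, (u - v) t x ≤ 0 from
    fun t ht x => sub_nonpos.mp (this t ht x)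
  refine hc.nonpos_of_parabolicOp_nonneg (hu.sub hv) hbdd
    (fun x => sub_nonpos.mpr (hT x)) fun t ht x hpos => ?_
  have hf_le : f t x (u t x) ≤ f t x (v t x) := hf t ht x (sub_pos.mp hpos).le
  rw [parabolicOp_sub]
  linarith [hsub t ht x, hsuper t ht x]

end QuadraticLyapunov

end MaximumPrinciple

/-- The solution of the terminal value problem `y' = B e^{γy}`, `y(T) = -G`. -/
def logBarrier (γ G B T t : ℝ) : ℝ :=
  -(1 / γ) * Real.log (Real.exp (γ * G) + γ * (T - t) * B)

section LogBarrier

variable {γ G B T t : ℝ}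

theorem logBarrier_terminal (hγ : γ ≠ 0) : logBarrier γ G B T T = -G := by
  simp [logBarrier, hγ]

theorem logBarrier_arg_pos (hγ : 0 ≤ γ) (hB : 0 ≤ B) (ht : t ≤ T) :
    0 < Real.exp (γ * G) + γ * (T - t) * B := by
  have : 0 ≤ T - t := sub_nonneg.mpr ht
  positivity

theorem exp_mul_logBarrier (hγ : 0 < γ) (hB : 0 ≤ B) (ht : t ≤ T) :
    Real.exp (γ * logBarrier γ G B T t) = (Real.exp (γ * G) + γ * (T - t) * B)⁻¹ := by
  have : γ * logBarrier γ G B T t = -Real.log (Real.exp (γ * G) + γ * (T - t) * B) := by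
    rw [logBarrier]
    field_simp
  rw [this, Real.exp_neg, Real.exp_log (logBarrier_arg_pos hγ.le hB ht)]

theorem hasDerivAt_logBarrier (hγ : 0 < γ) (hB : 0 ≤ B) (ht : t ≤ T) :
    HasDerivAt (logBarrier γ G B T) (B * Real.exp (γ * logBarrier γ G B T t)) t := by
  have harg : HasDerivAt (fun s => Real.exp (γ * G) + γ * (T - s) * B) (-(γ * B)) t := by
    simpa using
      ((((hasDerivAt_id t).const_sub T).const_mul γ).mul_const B).const_add (Real.exp (γ * G))
  refine ((harg.log (logBarrier_arg_pos hγ.le hB ht).ne').const_mul (-(1 / γ))).congr_deriv ?_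
  rw [exp_mul_logBarrier hγ hB ht]
  field_simp

theorem monotoneOn_logBarrier (hγ : 0 < γ) (hB : 0 ≤ B) :
    MonotoneOn (logBarrier γ G B T) (Iic T) := by
  intro s _ t ht hst
  refine mul_le_mul_of_nonpos_left (Real.log_le_log (logBarrier_arg_pos hγ.le hB ht) ?_)
    (by simpa using hγ.le)
  gcongr

end LogBarrier

section TerminalValueBounds

variable {t₀ T G : ℝ} {σ h u ut ux uxx : ℝ → ℝ → ℝ}

theorem le_add_mul_of_neg_le_parabolicOp {A : ℝ} (hc : QuadraticLyapunov t₀ T σ h)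
    (hu : HasParabolicDerivs t₀ T u ut ux uxx) (hbdd : ∃ M, ∀ t ∈ Icc t₀ T, ∀ x, u t x ≤ M)
    (hT : ∀ x, u T x ≤ G) (hL : ∀ t ∈ Ioo t₀ T, ∀ x, -A ≤ parabolicOp σ h ut ux uxx t x) :
    ∀ t ∈ Icc t₀ T, ∀ x, u t x ≤ G + (T - t) * A := by
  obtain ⟨M, hM⟩ := hbdd
  have hderiv (t : ℝ) : HasDerivAt (fun s => G + (T - s) * A) (-A) t := by
    simpa using (((hasDerivAt_id t).const_sub T).mul_const A).const_add G
  refine hc.le_of_subsolution_of_supersolution (f := fun _ _ _ => A)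
    (fun _ _ _ => antitone_const) hu (.of_time (by fun_prop) fun t _ => hderiv t)
    ?_ (by simpa using hT) (fun t ht x => ?_) (fun t _ x => ?_)
  · obtain ⟨m, hm⟩ := isCompact_Icc.bddBelow_image
      (f := fun t => G + (T - t) * A) (K := Icc t₀ T) (by fun_prop)
    exact ⟨M - m, fun t ht x => sub_le_sub (hM t ht x) (hm (mem_image_of_mem _ ht))⟩
  · linarith [hL t ht x]
  · rw [parabolicOp_time, neg_add_cancel]

theorem logBarrier_le_of_parabolicOp_le {γ B : ℝ} (hγ : 0 < γ) (hB : 0 ≤ B)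
    (hc : QuadraticLyapunov t₀ T σ h) (hu : HasParabolicDerivs t₀ T u ut ux uxx)
    (hbdd : ∃ m, ∀ t ∈ Icc t₀ T, ∀ x, m ≤ u t x) (hT : ∀ x, -G ≤ u T x)
    (hL : ∀ t ∈ Ioo t₀ T, ∀ x, parabolicOp σ h ut ux uxx t x ≤ B * Real.exp (γ * u t x)) :
    ∀ t ∈ Icc t₀ T, ∀ x, logBarrier γ G B T t ≤ u t x := by
  obtain ⟨m, hm⟩ := hbdd
  have hderiv (t : ℝ) (ht : t ≤ T) := hasDerivAt_logBarrier (G := G) hγ hB ht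
  refine hc.le_of_subsolution_of_supersolution (f := fun _ _ r => -(B * Real.exp (γ * r)))
    (fun _ _ _ r s hrs => ?_)
    (.of_time (fun t ht => (hderiv t ht.2).continuousAt.continuousWithinAt)
      fun t ht => hderiv t ht.2.le)
    hu ⟨-G - m, fun t ht x => ?_⟩ (fun x => ?_) (fun t _ x => ?_) (fun t ht x => ?_)
  · exact neg_le_neg (by gcongr)
  · have : logBarrier γ G B T t ≤ -G :=
      logBarrier_terminal hγ.ne' ▸ monotoneOn_logBarrier hγ hB ht.2 self_mem_Iic ht.2
    exact sub_le_sub this (hm t ht x)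
  · exact (logBarrier_terminal hγ.ne').trans_le (hT x)
  · rw [parabolicOp_time, add_neg_cancel]
  · linarith [hL t ht x]

end TerminalValueBounds

/-- Boundedness on `[0,T] × ℝ`. Without it `supN T u` is the infimum of the empty set, i.e. `0`. -/
def IsBoundedOnStrip (T : ℝ) (u : ℝ → ℝ → ℝ) : Prop :=
  ∃ M : ℝ, ∀ t ∈ Icc (0 : ℝ) T, ∀ x, |u t x| ≤ M

theorem supN_nonneg (T : ℝ) (u : ℝ → ℝ → ℝ) : 0 ≤ supN T u :=
  Real.sInf_nonneg fun _ hM => hM.1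

theorem IsBoundedOnStrip.abs_le_supN {T t : ℝ} {u : ℝ → ℝ → ℝ} (hu : IsBoundedOnStrip T u)
    (ht : t ∈ Icc 0 T) (x : ℝ) : |u t x| ≤ supN T u := by
  obtain ⟨M, hM⟩ := hu
  exact le_csInf ⟨M, (abs_nonneg _).trans (hM t ht x), hM⟩ fun _ hN => hN.2 t ht x

theorem abs_le_gSupN {g : ℝ → ℝ} (hg : ∃ M : ℝ, ∀ x, |g x| ≤ M) (x : ℝ) : |g x| ≤ gSupN g := by
  obtain ⟨M, hM⟩ := hg
  exact le_csInf ⟨M, (abs_nonneg _).trans (hM x), hM⟩ fun _ hN => hN.2 x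

theorem MemC12a.hasParabolicDerivs {T α : ℝ} {u ut ux uxx : ℝ → ℝ → ℝ}
    (hu : MemC12a T α u ut ux uxx) : HasParabolicDerivs 0 T u ut ux uxx :=
  ⟨hu.memU.1, hu.hasUt, hu.hasUx, hu.hasUxx⟩

theorem stmt_3_general {T γ : ℝ} {σ h a b u ut ux uxx : ℝ → ℝ → ℝ} {g : ℝ → ℝ} (hγ : 0 < γ)
    (hc : QuadraticLyapunov 0 T σ h) (ha : IsBoundedOnStrip T a) (hb : IsBoundedOnStrip T b)
    (hapos : ∀ t ∈ Icc (0 : ℝ) T, ∀ x, 0 ≤ a t x) (hbpos : ∀ t ∈ Icc (0 : ℝ) T, ∀ x, 0 ≤ b t x)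
    (hu : HasParabolicDerivs 0 T u ut ux uxx) (hu_bdd : IsBoundedOnStrip T u)
    (hpde : ∀ t ∈ Ioo (0 : ℝ) T, ∀ x,
      parabolicOp σ h ut ux uxx t x + a t x - b t x * Real.exp (γ * u t x) = 0)
    (hterm : ∀ x, u T x = g x) :
    ∀ t ∈ Icc (0 : ℝ) T, ∀ x,
      -(1 / γ) * Real.log (Real.exp (γ * gSupN g) + γ * T * supN T b) ≤ u t x ∧
      u t x ≤ gSupN g + T * supN T a := by
  intro t ht x
  obtain ⟨M, hM⟩ := hu_bdd
  have terminal_abs_le (x : ℝ) : |u T x| ≤ gSupN g := by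
    rw [hterm x]
    exact abs_le_gSupN ⟨M, fun y => hterm y ▸ hM T ⟨ht.1.trans ht.2, le_rfl⟩ y⟩ x
  constructor
  · have logBarrier_le : logBarrier γ (gSupN g) (supN T b) T t ≤ u t x := by
      refine logBarrier_le_of_parabolicOp_le hγ (supN_nonneg T b) hc hu
        ⟨-M, fun t ht x => (abs_le.mp (hM t ht x)).1⟩ (fun x => (abs_le.mp (terminal_abs_le x)).1)
        (fun t ht x => ?_) t ht x
      have htIcc := Ioo_subset_Icc_self ht
      have : b t x * Real.exp (γ * u t x) ≤ supN T b * Real.exp (γ * u t x) := by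
        gcongr
        exact (le_abs_self _).trans (hb.abs_le_supN htIcc x)
      linarith [hpde t ht x, hapos t htIcc x]
    simpa only [logBarrier, sub_zero] using
      (monotoneOn_logBarrier hγ (supN_nonneg T b) (ht.1.trans ht.2) ht.2 ht.1).trans logBarrier_le
  · have le_affine : u t x ≤ gSupN g + (T - t) * supN T a := by
      refine le_add_mul_of_neg_le_parabolicOp hc hu
        ⟨M, fun t ht x => (abs_le.mp (hM t ht x)).2⟩ (fun x => (abs_le.mp (terminal_abs_le x)).2)
        (fun t ht x => ?_) t ht x
      have htIcc := Ioo_subset_Icc_self ht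
      have : 0 ≤ b t x * Real.exp (γ * u t x) := mul_nonneg (hbpos t htIcc x) (Real.exp_pos _).le
      linarith [hpde t ht x, (le_abs_self _).trans (ha.abs_le_supN htIcc x)]
    have : 0 ≤ t * supN T a := mul_nonneg ht.1 (supN_nonneg T a)
    linarith

/-- pointwise bounds for the solution of the semilinear Cauchy problem. -/
theorem stmt_3 (T α γ : ℝ) (hT : 0 < T) (hα0 : 0 < α) (hα1 : α ≤ 1) (hγ : 0 < γ)
    (h a b : ℝ → ℝ → ℝ) (g : ℝ → ℝ)
    (hh : MemCa T α h) (ha : MemCa T α a) (hb : MemCa T α b) (hg : MemC2a α g)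
    (hapos : ∀ t ∈ Icc (0:ℝ) T, ∀ x : ℝ, 0 ≤ a t x)
    (hbpos : ∀ t ∈ Icc (0:ℝ) T, ∀ x : ℝ, 0 ≤ b t x)
    (u ut ux uxx : ℝ → ℝ → ℝ)
    (hmem : MemC12a T α u ut ux uxx) (hsol : SolvesSemi T γ h a b g ut ux uxx u) :
    ∀ t ∈ Icc (0:ℝ) T, ∀ x : ℝ,
      -(1/γ) * Real.log (Real.exp (γ * gSupN g) + γ * T * supN T b) ≤ u t x ∧
      u t x ≤ gSupN g + T * supN T a :=
  let ⟨_, hH⟩ := hh.2.1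
  stmt_3_general hγ (.of_bounded_drift one_half_pos.le fun t ht => hH t (Ioo_subset_Icc_self ht))
    ha.2.1 hb.2.1 hapos hbpos hmem.hasParabolicDerivs hmem.memU.2.1
    (fun t ht => hsol.1 t (Ioo_subset_Ico_self ht)) hsol.2
end
end
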